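/- arXiv:1811.03357 — 2 statements merged into one kernel-verified Lean document; each statement's English description precedes it below -/
import Mathlib

section
/- Let P be a full-dimensional lattice polytope of dimension d in ℝ^d with normalized volume Vol(P) = d!·vol(P). Then the number of lattice points of P satisfies |P ∩ ℤ^d| ≤ d + Vol(P). -/
open MeasureTheory

/-- Coercion of an integer point to a real point. -/
noncomputable def toR {d : ℕ} (x : Fin d → ℤ) : Fin d → ℝ := fun i => (x i : ℝ)

open scoped ENNReal Nat

/-!
Delete the points of a finite full-dimensional set `S` of lattice points one at a time. As long as
`S` is affinely dependent, some vertex `e` of its hull can be removed without losing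
full-dimensionality: otherwise every vertex `e` has an affine function equal to `1` at `e` and
vanishing on the rest of `S`; these functions sum to `1` on the vertices, hence on the whole hull,
so every point of `S` is a vertex and `S` is affinely independent.

Each removed vertex `e` lies outside the hull of the remaining points and sees one of its facets.
The cone with apex `e` over that facet contains a lattice simplex, of normalized volume at least
`1`, and meets the old hull only in a hyperplane, so the normalized volume drops by at least `1`
with each deletion. When no deletion is possible, at most `d + 1` points are left, and they still
span a simplex of normalized volume at least `1`.
-/

section AffineSpan

variable {k V P : Type*} [Field k] [AddCommGroup V] [Module k V] [AddTorsor V P]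

theorem exists_affineMap_eq_one_of_notMem_affineSpan {A : Set P} {p : P}
    (hp : p ∉ affineSpan k A) : ∃ f : P →ᵃ[k] k, f p = 1 ∧ ∀ a ∈ A, f a = 0 := by
  obtain rfl | ⟨a₀, ha₀⟩ := A.eq_empty_or_nonempty
  · exact ⟨AffineMap.const k P 1, by simp⟩
  have hv : p -ᵥ a₀ ∉ vectorSpan k A := fun hv ↦ hp <| by
    simpa using vadd_mem_affineSpan_of_mem_affineSpan_of_mem_vectorSpan (mem_affineSpan k ha₀) hv
  obtain ⟨g, hgp, hgA⟩ := Submodule.exists_le_ker_of_notMem hv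
  let f : P →ᵃ[k] k := ((g (p -ᵥ a₀))⁻¹ • g).toAffineMap.comp (AffineEquiv.vaddConst k a₀).symm
  refine ⟨f, ?_, fun a ha ↦ ?_⟩
  · simp [f, hgp]
  · have : g (a -ᵥ a₀) = 0 := hgA (vsub_mem_vectorSpan k ha ha₀)
    simp [f, this]

theorem affineIndependent_of_forall_notMem_affineSpan {ι : Type*} {p : ι → P}
    (hp : ∀ i, p i ∉ affineSpan k (p '' {i}ᶜ)) : AffineIndependent k p := by
  classical
  choose f hf₁ hf₀ using fun i ↦ exists_affineMap_eq_one_of_notMem_affineSpan (hp i)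
  have hpi : ⇑(AffineMap.pi f) ∘ p = fun j ↦ Pi.single j (1 : k) := by
    ext j i
    obtain rfl | hij := eq_or_ne i j
    · simp [hf₁]
    · simp [hij, hf₀ i (p j) ⟨j, hij.symm, rfl⟩]
  refine .of_comp (AffineMap.pi f) ?_
  rw [hpi]
  exact (Pi.linearIndependent_single_one ι k).affineIndependent

theorem eq_of_forall_notMem_affineSpan_sdiff {S E : Set P} (hES : E ⊆ S) (hE : E.Finite)
    (hspan : S ⊆ affineSpan k E) (h : ∀ e ∈ E, e ∉ affineSpan k (S \ {e})) : E = S := by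
  refine hES.antisymm fun s hs ↦ ?_
  by_contra hsE
  choose! f hf₁ hf₀ using fun e he ↦ exists_affineMap_eq_one_of_notMem_affineSpan (h e he)
  let g : P →ᵃ[k] k := ∑ e ∈ hE.toFinset, f e
  have hg (y : P) : g y = ∑ e ∈ hE.toFinset, f e y :=
    map_sum (⟨⟨fun f : P →ᵃ[k] k ↦ f y, rfl⟩, fun _ _ ↦ rfl⟩ : (P →ᵃ[k] k) →+ k) f _
  have hg_one : Set.EqOn g (AffineMap.const k P 1) E := fun y hy ↦ by
    rw [hg, Finset.sum_eq_single_of_mem y (by simpa using hy), hf₁ y hy, AffineMap.const_apply]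
    exact fun e he hey ↦ hf₀ e (by simpa using he) y ⟨hES hy, hey.symm⟩
  have hg_zero : g s = 0 := by
    rw [hg]
    refine Finset.sum_eq_zero fun e he ↦ ?_
    have he : e ∈ E := by simpa using he
    exact hf₀ e he s ⟨hs, fun hse ↦ hsE (hse ▸ he)⟩
  exact zero_ne_one (hg_zero.symm.trans (AffineMap.eqOn_affineSpan hg_one (hspan hs)))

theorem exists_affineMap_neg_of_affineSpan_ne_top [LinearOrder k] [IsStrictOrderedRing k]
    {S A : Set P} (hS : affineSpan k S = ⊤) (hA : affineSpan k A ≠ ⊤) :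
    ∃ g : P →ᵃ[k] k, (∀ a ∈ A, g a = 0) ∧ ∃ s ∈ S, g s < 0 := by
  obtain ⟨y, -, hy⟩ := SetLike.exists_of_lt (lt_top_iff_ne_top.2 hA)
  obtain ⟨g, hgy, hgA⟩ := exists_affineMap_eq_one_of_notMem_affineSpan hy
  obtain ⟨s, hs, hgs⟩ : ∃ s ∈ S, g s ≠ 0 := by
    by_contra! hg
    have hg₀ : g = AffineMap.const k P 0 := AffineMap.ext_on hS fun s hs ↦ hg s hs
    simp [hg₀] at hgy
  obtain hneg | hpos := hgs.lt_or_gt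
  · exact ⟨g, hgA, s, hs, hneg⟩
  · exact ⟨-g, fun a ha ↦ by simp [hgA a ha], s, hs, by simpa using hpos⟩

theorem exists_linearIndependent_vadd_mem [FiniteDimensional k V] {n : ℕ}
    (hn : Module.finrank k V = n) {A : Set P} (hA : affineSpan k A = ⊤) {x : P} (hx : x ∈ A) :
    ∃ w : Fin n → V, LinearIndependent k w ∧ ∀ i, w i +ᵥ x ∈ A := by
  have hspan : Submodule.span k ((· -ᵥ x) '' A) = ⊤ := by
    rw [← vectorSpan_eq_span_vsub_set_right k hx, ← direction_affineSpan, hA,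
      AffineSubspace.direction_top]
  have hw := Submodule.exists_fun_fin_finrank_span_eq k ((· -ᵥ x) '' A)
  rw [hspan, finrank_top, hn] at hw
  obtain ⟨w, hwA, -, hw⟩ := hw
  refine ⟨w, hw, fun i ↦ ?_⟩
  obtain ⟨a, ha, hai⟩ := hwA i
  simpa [← hai] using ha

end AffineSpan

theorem exists_forall_nonneg_add_mul {α 𝕜 : Type*} [Field 𝕜] [LinearOrder 𝕜]
    [IsStrictOrderedRing 𝕜] {S : Finset α} {f g : α → 𝕜} (hf : ∀ s ∈ S, 0 ≤ f s)
    (hg : ∃ s ∈ S, g s < 0) :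
    ∃ t : 𝕜, (∀ s ∈ S, 0 ≤ f s + t * g s) ∧ ∃ m ∈ S, g m < 0 ∧ f m + t * g m = 0 := by
  classical
  obtain ⟨s₀, hs₀, hgs₀⟩ := hg
  obtain ⟨m, hm, hmin⟩ := (S.filter (g · < 0)).exists_min_image (fun s ↦ f s / -g s)
    ⟨s₀, by simp [hs₀, hgs₀]⟩
  obtain ⟨hmS, hgm⟩ := Finset.mem_filter.1 hm
  refine ⟨f m / -g m, fun s hs ↦ ?_, m, hmS, hgm, ?_⟩
  · obtain hgs | hgs := lt_or_ge (g s) 0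
    · have hle := hmin s (by simp [hs, hgs])
      rw [le_div_iff₀ (neg_pos.2 hgs)] at hle
      linarith
    · have ht : 0 ≤ f m / -g m := div_nonneg (hf m hmS) (neg_pos.2 hgm).le
      have := hf s hs
      positivity
  · rw [div_neg, neg_mul, div_mul_cancel₀ _ hgm.ne, add_neg_cancel]

theorem notMem_convexHull_sdiff_of_mem_extremePoints {E : Type*} [AddCommGroup E] [Module ℝ E]
    {S : Set E} {e : E} (he : e ∈ (convexHull ℝ S).extremePoints ℝ) :
    e ∉ convexHull ℝ (S \ {e}) := fun h ↦
  (((convex_convexHull ℝ S).mem_extremePoints_iff_mem_sdiff_convexHull_sdiff).1 he).2 <|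
    convexHull_mono (Set.sdiff_subset_sdiff_left (subset_convexHull ℝ S)) h

section ConvexHull

variable {E : Type*} [AddCommGroup E] [Module ℝ E] [TopologicalSpace E] [T2Space E]
  [IsTopologicalAddGroup E] [ContinuousSMul ℝ E] [LocallyConvexSpace ℝ E]

theorem convexHull_extremePoints_convexHull_of_finite {S : Set E} (hS : S.Finite) :
    convexHull ℝ ((convexHull ℝ S).extremePoints ℝ) = convexHull ℝ S := by
  have hfin := hS.subset (extremePoints_convexHull_subset (𝕜 := ℝ))
  rw [← (hfin.isClosed_convexHull ℝ).closure_eq,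
    closure_convexHull_extremePoints (hS.isCompact_convexHull ℝ) (convex_convexHull ℝ S)]

theorem exists_affineMap_neg_of_notMem_convexHull {S : Set E} (hS : S.Finite) {x : E}
    (hx : x ∉ convexHull ℝ S) : ∃ f : E →ᵃ[ℝ] ℝ, f x < 0 ∧ ∀ s ∈ S, 0 ≤ f s := by
  obtain ⟨ℓ, u, hℓx, hℓS⟩ :=
    geometric_hahn_banach_point_closed (convex_convexHull ℝ S) (hS.isClosed_convexHull ℝ) hx
  refine ⟨ℓ.toLinearMap.toAffineMap - AffineMap.const ℝ E u, by simpa using hℓx, fun s hs ↦ ?_⟩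
  simpa using (hℓS s (subset_convexHull ℝ S hs)).le

theorem exists_affineMap_visible_facet {S : Set E} (hS : S.Finite) (hspan : affineSpan ℝ S = ⊤)
    {x : E} (hx : x ∉ convexHull ℝ S) :
    ∃ f : E →ᵃ[ℝ] ℝ, f x < 0 ∧ (∀ s ∈ S, 0 ≤ f s) ∧
      affineSpan ℝ (insert x {s ∈ S | f s = 0}) = ⊤ := by
  classical
  lift S to Finset E using hS
  -- `f` separates `x` from `S` and vanishes on as much of `S` as possible: if `x` and the zeros of
  -- `f` in `S` did not span, tilting `f` around them would produce a new zero.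
  obtain ⟨f, ⟨hfx, hfS⟩, hmin⟩ := exists_minimalFor_of_wellFoundedLT
    (fun f : E →ᵃ[ℝ] ℝ ↦ f x < 0 ∧ ∀ s ∈ S, 0 ≤ f s) (fun f ↦ S.filter (f · ≠ 0))
    (exists_affineMap_neg_of_notMem_convexHull S.finite_toSet hx)
  refine ⟨f, hfx, hfS, of_not_not fun hne ↦ ?_⟩
  obtain ⟨g, hg₀, hg⟩ := exists_affineMap_neg_of_affineSpan_ne_top hspan hne
  obtain ⟨t, hpos, m, hm, hgm, htm⟩ := exists_forall_nonneg_add_mul hfS hg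
  have hgx : g x = 0 := hg₀ x (Set.mem_insert x _)
  have hzero {s : E} (hs : s ∈ S) (hfs : f s = 0) : g s = 0 := hg₀ s (.inr ⟨hs, hfs⟩)
  have hle : S.filter ((f + t • g) · ≠ 0) ⊆ S.filter (f · ≠ 0) := fun s hs ↦ by
    rw [Finset.mem_filter] at hs ⊢
    exact ⟨hs.1, fun hfs ↦ hs.2 (by simp [hfs, hzero hs.1 hfs])⟩
  have hmf : m ∈ S.filter (f · ≠ 0) :=
    Finset.mem_filter.2 ⟨hm, fun hfm ↦ hgm.ne (hzero hm hfm)⟩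
  have hm' := hmin ⟨by simpa [hgx] using hfx, by simpa using hpos⟩ hle hmf
  exact (Finset.mem_filter.1 hm').2 (by simpa using htm)

theorem exists_mem_notMem_convexHull_sdiff_of_not_affineIndependent {S : Set E} (hS : S.Finite)
    (hdep : ¬ AffineIndependent ℝ ((↑) : S → E)) :
    ∃ e ∈ S, e ∉ convexHull ℝ (S \ {e}) ∧ e ∈ affineSpan ℝ (S \ {e}) := by
  contrapose! hdep
  have hES : (convexHull ℝ S).extremePoints ℝ ⊆ S := extremePoints_convexHull_subset
  have hspan : S ⊆ affineSpan ℝ ((convexHull ℝ S).extremePoints ℝ) := by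
    rw [← affineSpan_convexHull, convexHull_extremePoints_convexHull_of_finite hS,
      affineSpan_convexHull]
    exact subset_affineSpan ℝ S
  have hE : ∀ e ∈ (convexHull ℝ S).extremePoints ℝ, e ∉ affineSpan ℝ (S \ {e}) := fun e he ↦
    hdep e (hES he) (notMem_convexHull_sdiff_of_mem_extremePoints he)
  have hES_eq := eq_of_forall_notMem_affineSpan_sdiff hES (hS.subset hES) hspan hE
  refine affineIndependent_of_forall_notMem_affineSpan fun s ↦ ?_
  rw [Set.image_compl_eq_range_sdiff_image Subtype.val_injective]
  simpa using hE s (hES_eq.ge s.2)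

end ConvexHull

section Hyperplane

variable {E : Type*} [NormedAddCommGroup E] [NormedSpace ℝ E] [FiniteDimensional ℝ E]
  [MeasurableSpace E] [BorelSpace E] (μ : Measure E) [μ.IsAddHaarMeasure] {f : E →ᵃ[ℝ] ℝ}

theorem addHaar_setOf_affineMap_eq_zero (hf : f ≠ 0) : μ {x | f x = 0} = 0 := by
  have hne : affineSpan ℝ {x | f x = 0} ≠ ⊤ := fun htop ↦
    hf (AffineMap.ext_on htop fun x hx ↦ hx)
  exact measure_mono_null (subset_affineSpan ℝ _) (Measure.addHaar_affineSubspace μ _ hne)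

theorem aedisjoint_convexHull_of_affineMap {S T : Set E} (hf : f ≠ 0) (hS : ∀ s ∈ S, 0 ≤ f s)
    (hT : ∀ t ∈ T, f t ≤ 0) : AEDisjoint μ (convexHull ℝ S) (convexHull ℝ T) :=
  measure_mono_null (fun _ hy ↦ le_antisymm
    (convexHull_min hT ((convex_Iic (0 : ℝ)).affine_preimage f) hy.2)
    (convexHull_min hS ((convex_Ici (0 : ℝ)).affine_preimage f) hy.1))
    (addHaar_setOf_affineMap_eq_zero μ hf)

end Hyperplane

section CornerSimplex

variable (ι : Type*) [Fintype ι]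

/-- The standard corner simplex `conv(0, e₁, …, eₙ)`, the unimodular simplex to which lattice
simplices are compared. It is given by its facet inequalities rather than as a convex hull. -/
def cornerSimplex : Set (ι → ℝ) := {t | (∀ i, 0 ≤ t i) ∧ ∑ i, t i ≤ 1}

variable {ι}

theorem convex_cornerSimplex : Convex ℝ (cornerSimplex ι) := by
  have hsum : IsLinearMap ℝ fun t : ι → ℝ ↦ ∑ i, t i :=
    ⟨fun _ _ ↦ Finset.sum_add_distrib, fun _ _ ↦ (Finset.mul_sum ..).symm⟩
  exact (convex_Ici (0 : ι → ℝ)).inter (convex_halfSpace_le hsum 1)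

theorem convexHull_insert_zero_range_single_eq_cornerSimplex [DecidableEq ι] :
    convexHull ℝ (insert 0 (Set.range fun i ↦ Pi.single i 1)) = cornerSimplex ι := by
  refine Set.Subset.antisymm (convexHull_min ?_ convex_cornerSimplex) fun t ⟨ht, hsum⟩ ↦ ?_
  · rintro _ (rfl | ⟨i, rfl⟩)
    · simp [cornerSimplex]
    · exact ⟨fun j ↦ (Pi.single_nonneg.2 zero_le_one : (0 : ι → ℝ) ≤ Pi.single i 1) j, by simp⟩
  have hcomb : t = ∑ o : Option ι, o.elim (1 - ∑ i, t i) t • o.elim 0 (fun i ↦ Pi.single i 1) := by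
    rw [Fintype.sum_option]
    ext j
    simp [Pi.single_apply]
  rw [hcomb]
  refine (convex_convexHull ℝ _).sum_mem ?_ (by simp [Fintype.sum_option]) ?_
  · rintro (_ | i) - <;> simp [ht, hsum]
  · rintro (_ | i) - <;> exact subset_convexHull ℝ _ (by simp)

theorem volume_image_toLin'_diagonal_units [DecidableEq ι] (ε : ι → ℤˣ) (A : Set (ι → ℝ)) :
    volume (Matrix.toLin' (Matrix.diagonal fun i ↦ ((ε i : ℤ) : ℝ)) '' A) = volume A := by
  have habs (i : ι) : |((ε i : ℤ) : ℝ)| = 1 := by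
    rw [← Int.cast_abs, Int.isUnit_iff_abs_eq.1 (ε i).isUnit, Int.cast_one]
  rw [Measure.addHaar_image_linearMap, LinearMap.det_toLin', Matrix.det_diagonal, Finset.abs_prod]
  simp [habs]

theorem setOf_sum_abs_lt_one_subset_iUnion_image_cornerSimplex [DecidableEq ι] :
    {x : ι → ℝ | ∑ i, |x i| < 1} ⊆ ⋃ ε : ι → ℤˣ,
      Matrix.toLin' (Matrix.diagonal fun i ↦ ((ε i : ℤ) : ℝ)) '' cornerSimplex ι := by
  intro x hx
  refine Set.mem_iUnion.2 ⟨fun i ↦ if 0 ≤ x i then 1 else -1,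
    fun i ↦ |x i|, ⟨fun i ↦ abs_nonneg _, le_of_lt hx⟩, ?_⟩
  ext i
  rw [Matrix.toLin'_apply, Matrix.mulVec_diagonal]
  obtain h | h := le_or_gt 0 (x i)
  · simp [h, abs_of_nonneg]
  · simp [h.not_ge, abs_of_neg h]

theorem volume_setOf_sum_abs_lt_one :
    volume {x : ι → ℝ | ∑ i, |x i| < 1} = 2 ^ Fintype.card ι / ((Fintype.card ι)! : ℝ≥0∞) := by
  have h := volume_sum_rpow_lt_one ι (p := 1) le_rfl
  have hΓ : Real.Gamma (1 + 1) = 1 := by simpa using Real.Gamma_nat_eq_factorial 1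
  simp only [Real.rpow_one, div_one, hΓ, Real.Gamma_nat_eq_factorial, mul_one] at h
  rw [h, ENNReal.ofReal_div_of_pos (by positivity), ENNReal.ofReal_pow zero_le_two,
    ENNReal.ofReal_ofNat, ENNReal.ofReal_natCast]

theorem one_le_factorial_mul_volume_cornerSimplex :
    1 ≤ ((Fintype.card ι)! : ℝ≥0∞) * volume (cornerSimplex ι) := by
  classical
  have hcover : volume {x : ι → ℝ | ∑ i, |x i| < 1} ≤
      2 ^ Fintype.card ι * volume (cornerSimplex ι) :=
    calc volume {x : ι → ℝ | ∑ i, |x i| < 1}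
      _ ≤ ∑ ε : ι → ℤˣ, volume
          (Matrix.toLin' (Matrix.diagonal fun i ↦ ((ε i : ℤ) : ℝ)) '' cornerSimplex ι) :=
        (measure_mono setOf_sum_abs_lt_one_subset_iUnion_image_cornerSimplex).trans
          (measure_iUnion_fintype_le _ _)
      _ = 2 ^ Fintype.card ι * volume (cornerSimplex ι) := by
        simp only [volume_image_toLin'_diagonal_units, Finset.sum_const, Finset.card_univ,
          Fintype.card_pi, Fintype.card_units_int, Finset.prod_const, nsmul_eq_mul, Nat.cast_pow,
          Nat.cast_ofNat]
  rw [volume_setOf_sum_abs_lt_one, ENNReal.div_le_iff (by positivity) (by finiteness),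
    mul_assoc] at hcover
  nth_rw 1 [← mul_one (2 ^ _),
    ENNReal.mul_le_mul_iff_right (by positivity) (by finiteness)] at hcover
  rwa [mul_comm]

theorem volume_convexHull_insert_range_add [DecidableEq ι] (x : ι → ℝ) (w : ι → ι → ℝ) :
    volume (convexHull ℝ (insert x (Set.range fun i ↦ w i + x))) =
      ENNReal.ofReal |(Matrix.of w).det| * volume (cornerSimplex ι) := by
  let g : (ι → ℝ) →ₗ[ℝ] (ι → ℝ) := (Matrix.of w).transpose.toLin'
  let f : (ι → ℝ) →ᵃ[ℝ] (ι → ℝ) := AffineMap.const ℝ _ x + g.toAffineMap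
  have hf : f '' cornerSimplex ι = (x + ·) '' (g '' cornerSimplex ι) := by
    rw [Set.image_image]; rfl
  have hvert : f '' insert 0 (Set.range fun i ↦ Pi.single i 1) =
      insert x (Set.range fun i ↦ w i + x) := by
    rw [Set.image_insert_eq, ← Set.range_comp]
    congr! 3
    · simp [f]
    · ext j
      simp [f, g, add_comm]
  rw [← hvert, ← AffineMap.image_convexHull,
    convexHull_insert_zero_range_single_eq_cornerSimplex, hf, Set.image_add_left,
    measure_preimage_add, Measure.addHaar_image_linearMap, LinearMap.det_toLin',
    Matrix.det_transpose]

end CornerSimplex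

theorem one_le_abs_det_map_intCast {n : Type*} [Fintype n] [DecidableEq n] {M : Matrix n n ℤ}
    (hM : (M.map (Int.cast : ℤ → ℝ)).det ≠ 0) : 1 ≤ |(M.map (Int.cast : ℤ → ℝ)).det| := by
  rw [← Int.cast_det] at hM ⊢
  exact_mod_cast Int.one_le_abs (Int.cast_ne_zero.1 hM)

section Lattice

variable {d : ℕ}

/-- The normalized volume `d! · vol A` in `ℝᵈ`, in which every full-dimensional lattice simplex
has volume at least `1`. It takes values in `ℝ≥0∞`, so no finiteness has to be assumed. -/
noncomputable def normalizedVolume (A : Set (Fin d → ℝ)) : ℝ≥0∞ := (d ! : ℝ≥0∞) * volume A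

theorem normalizedVolume_mono {A B : Set (Fin d → ℝ)} (h : A ⊆ B) :
    normalizedVolume A ≤ normalizedVolume B :=
  mul_le_mul_right (measure_mono h) _

theorem normalizedVolume_union {A B : Set (Fin d → ℝ)} (hB : MeasurableSet B)
    (hAB : AEDisjoint volume A B) :
    normalizedVolume (A ∪ B) = normalizedVolume A + normalizedVolume B := by
  rw [normalizedVolume, measure_union₀ hB.nullMeasurableSet hAB, mul_add, normalizedVolume,
    normalizedVolume]

theorem one_le_normalizedVolume_convexHull {A : Set (Fin d → ℝ)} (hA : A ⊆ Set.range toR)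
    (hspan : affineSpan ℝ A = ⊤) : 1 ≤ normalizedVolume (convexHull ℝ A) := by
  obtain ⟨x, hx⟩ : A.Nonempty := (affineSpan_nonempty ℝ).1 (hspan ▸ ⟨0, trivial⟩)
  obtain ⟨w, hw, hwA⟩ := exists_linearIndependent_vadd_mem (Module.finrank_fin_fun ℝ) hspan hx
  obtain ⟨z, rfl⟩ := hA hx
  choose y hy using fun i ↦ hA (hwA i)
  let M : Matrix (Fin d) (Fin d) ℤ := .of fun i j ↦ y i j - z j
  have hM : M.map (Int.cast : ℤ → ℝ) = .of w := by
    ext i j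
    simpa [M, toR, sub_eq_iff_eq_add] using congrFun (hy i) j
  have hdet : 1 ≤ |(Matrix.of w).det| := by
    rw [← hM]
    refine one_le_abs_det_map_intCast ?_
    rw [hM, ← isUnit_iff_ne_zero, ← Matrix.isUnit_iff_isUnit_det]
    exact Matrix.linearIndependent_rows_iff_isUnit.1 hw
  calc 1
    _ ≤ (d ! : ℝ≥0∞) * volume (cornerSimplex (Fin d)) := by
      simpa using one_le_factorial_mul_volume_cornerSimplex (ι := Fin d)
    _ ≤ (d ! : ℝ≥0∞) * (ENNReal.ofReal |(Matrix.of w).det| * volume (cornerSimplex (Fin d))) := by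
      gcongr
      exact le_mul_of_one_le_left' (ENNReal.one_le_ofReal.2 hdet)
    _ = normalizedVolume (convexHull ℝ (insert (toR z) (Set.range fun i ↦ w i + toR z))) := by
      rw [normalizedVolume, volume_convexHull_insert_range_add]
    _ ≤ normalizedVolume (convexHull ℝ A) :=
      normalizedVolume_mono <| convexHull_mono <|
        Set.insert_subset hx (Set.range_subset_iff.2 hwA)

theorem isometry_toR : Isometry (toR (d := d)) :=
  .of_dist_eq fun x y ↦ by
    simp only [toR, dist_pi_def, nndist_dist, Int.dist_cast_real]

theorem finite_setOf_toR_mem {K : Set (Fin d → ℝ)} (hK : IsCompact K) :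
    {x : Fin d → ℤ | toR x ∈ K}.Finite :=
  (isometry_toR.isClosedEmbedding.isCompact_preimage hK).finite_of_discrete

theorem normalizedVolume_convexHull_add_one_le_of_notMem {S : Set (Fin d → ℝ)}
    (hS : S.Finite) {x : Fin d → ℝ} (hint : insert x S ⊆ Set.range toR)
    (hspan : affineSpan ℝ S = ⊤) (hx : x ∉ convexHull ℝ S) :
    normalizedVolume (convexHull ℝ S) + 1 ≤ normalizedVolume (convexHull ℝ (insert x S)) := by
  obtain ⟨f, hfx, hfS, hTspan⟩ := exists_affineMap_visible_facet hS hspan hx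
  set T : Set (Fin d → ℝ) := insert x {s ∈ S | f s = 0}
  have hTS : T ⊆ insert x S := Set.insert_subset_insert (Set.sep_subset _ _)
  have hfT : ∀ t ∈ T, f t ≤ 0 := by
    rintro t (rfl | ht)
    exacts [hfx.le, ht.2.le]
  have hf : f ≠ 0 := fun hf ↦ by simp [hf] at hfx
  have hdisj : AEDisjoint volume (convexHull ℝ S) (convexHull ℝ T) :=
    aedisjoint_convexHull_of_affineMap volume hf hfS hfT
  have hTmeas : MeasurableSet (convexHull ℝ T) :=
    (((hS.insert x).subset hTS).isClosed_convexHull ℝ).measurableSet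
  calc normalizedVolume (convexHull ℝ S) + 1
    _ ≤ normalizedVolume (convexHull ℝ S) + normalizedVolume (convexHull ℝ T) := by
      gcongr
      exact one_le_normalizedVolume_convexHull (hTS.trans hint) hTspan
    _ = normalizedVolume (convexHull ℝ S ∪ convexHull ℝ T) :=
      (normalizedVolume_union hTmeas hdisj).symm
    _ ≤ normalizedVolume (convexHull ℝ (insert x S)) :=
      normalizedVolume_mono <| Set.union_subset (convexHull_mono (Set.subset_insert x _))
        (convexHull_mono hTS)

theorem card_le_add_normalizedVolume_convexHull (S : Finset (Fin d → ℝ))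
    (hint : (S : Set (Fin d → ℝ)) ⊆ Set.range toR)
    (hspan : affineSpan ℝ (S : Set (Fin d → ℝ)) = ⊤) :
    (S.card : ℝ≥0∞) ≤ d + normalizedVolume (convexHull ℝ (S : Set (Fin d → ℝ))) := by
  induction S using Finset.strongInduction with | H S ih =>
  by_cases hind : AffineIndependent ℝ ((↑) : S → Fin d → ℝ)
  · have hcard : S.card ≤ d + 1 := by
      simpa using hind.card_le_finrank_succ.trans
        (Nat.add_le_add_right (Submodule.finrank_le _) 1)
    calc (S.card : ℝ≥0∞)
      _ ≤ d + 1 := by exact_mod_cast hcard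
      _ ≤ _ := by
        gcongr
        exact one_le_normalizedVolume_convexHull hint hspan
  · obtain ⟨e, he, hhull, hespan⟩ :=
      exists_mem_notMem_convexHull_sdiff_of_not_affineIndependent S.finite_toSet hind
    rw [← Finset.coe_erase] at hhull hespan
    have hinsert : insert e (S.erase e : Set (Fin d → ℝ)) = S := by
      rw [← Finset.coe_insert, Finset.insert_erase he]
    have hspan_erase : affineSpan ℝ (S.erase e : Set (Fin d → ℝ)) = ⊤ := by
      rw [← affineSpan_insert_eq_affineSpan ℝ hespan, hinsert, hspan]
    have hgrow := normalizedVolume_convexHull_add_one_le_of_notMem (S.erase e).finite_toSet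
      (hinsert ▸ hint) hspan_erase hhull
    rw [hinsert] at hgrow
    calc (S.card : ℝ≥0∞)
      _ = (S.erase e).card + 1 := by exact_mod_cast (Finset.card_erase_add_one he).symm
      _ ≤ d + normalizedVolume (convexHull ℝ (S.erase e : Set (Fin d → ℝ))) + 1 := by
        gcongr
        exact ih _ (Finset.erase_ssubset he)
          ((Finset.coe_subset.2 (Finset.erase_subset e S)).trans hint) hspan_erase
      _ ≤ d + normalizedVolume (convexHull ℝ (S : Set (Fin d → ℝ))) := by
        rw [add_assoc]
        gcongr

end Lattice

/-- A full-dimensional lattice polytope `P` of dimension `d` satisfies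
`|P ∩ ℤ^d| ≤ d + Vol(P)`, where `Vol` is the normalized volume `d! · vol`. -/
theorem stmt0 (d : ℕ) (hd : 0 < d) (V : Finset (Fin d → ℤ)) (hV : V.Nonempty)
    (P : Set (Fin d → ℝ)) (hP : P = convexHull ℝ (toR '' (V : Set (Fin d → ℤ))))
    (hfull : affineSpan ℝ P = ⊤) :
    ({x : Fin d → ℤ | toR x ∈ P}.ncard : ℝ)
      ≤ d + (Nat.factorial d : ℝ) * (volume P).toReal := by
  have hP_compact : IsCompact P := hP ▸ (V.finite_toSet.image toR).isCompact_convexHull ℝ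
  have hfin := (finite_setOf_toR_mem hP_compact).image toR
  have hhull : convexHull ℝ (toR '' {x | toR x ∈ P}) = P := by
    refine (convexHull_min (Set.image_subset_iff.2 fun x hx ↦ hx)
      (hP ▸ convex_convexHull ℝ _)).antisymm ?_
    nth_rw 1 [hP]
    exact convexHull_mono (Set.image_mono fun x hx ↦
      hP ▸ subset_convexHull ℝ _ (Set.mem_image_of_mem toR hx))
  have hspan : affineSpan ℝ (toR '' {x | toR x ∈ P}) = ⊤ := by
    rw [← affineSpan_convexHull, hhull, hfull]
  have hbound := card_le_add_normalizedVolume_convexHull hfin.toFinset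
    (by simp) (by simpa using hspan)
  rw [← Set.ncard_eq_toFinset_card _ hfin, Set.ncard_image_of_injective _ isometry_toR.injective,
    hfin.coe_toFinset, hhull, normalizedVolume] at hbound
  have hP_ne_top : volume P ≠ ∞ := hP_compact.measure_lt_top.ne
  simpa [ENNReal.toReal_add, ENNReal.mul_ne_top, hP_ne_top] using
    ENNReal.toReal_mono (by finiteness) hbound
end

section
/- For each nonnegative integer k, the polytope Q = conv(0, e₁, e₂, e₃, e₁+e₃, e₂+e₃, e₁+e₂+ke₃, e₁+e₂+(k+1)e₃) ⊂ ℝ³ has normalized volume k + 6 and exactly 8 lattice points (its vertices) when k ≥ 2; consequently its h*-vector is (1, 4, k+1, 0). -/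
/-!
Over the square `[0, 1]²` the polytope is bounded below by the folded plane
`z = k · max(0, x + y - 1)` and above by `z = 1 + k · min(x, y)`, so both its volume and the number
of lattice points of its dilates are obtained fibre by fibre. The only nontrivial contribution is
`∑ min(a, b) - max(0, a + b - t)`, summed over `b`: the reflection `b ↦ t - b` turns
`max(0, a + b - t)` into `a - min(a, b)`, and the sum (or integral) over `0 ≤ b ≤ t` is
`a (t - a)`. This gives normalized volume `6 + k` and Ehrhart polynomial
`(t + 1)³ + k · C(t + 1, 3)`. By `(t + 1)³ = C(t + 3, 3) + 4 C(t + 2, 3) + C(t + 1, 3)` the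
coefficients are `(1, 4, k + 1, 0)`; they are unique because `t ↦ C(t + d - i, d)` vanishes for
`t < i` and equals `1` at `t = i`. At `t = 1` there are eight lattice points, so the eight vertices
exhaust them.
-/

open MeasureTheory Pointwise

section HStarVector

variable {d : ℕ}

/-- `h` is the `h*`-vector of `P`: the Ehrhart function `t ↦ |tP ∩ ℤᵈ|` is
`∑ i, h i * C(t + d - i, d)`. Only positive dilations are considered, where `t + d - i` does not
truncate and `P` is not required to be nonempty. -/
def IsHStarVector (P : Set (Fin d → ℝ)) (h : Fin (d + 1) → ℤ) : Prop :=
  ∀ t : ℕ, 1 ≤ t →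
    ({x : Fin d → ℤ | toR x ∈ (t : ℝ) • P}.ncard : ℤ) =
      ∑ i, h i * ((t + d - (i : ℕ)).choose d : ℤ)

open Polynomial in
theorem sum_mul_choose_eq_zero_of_eventually {h : Fin (d + 1) → ℤ}
    (hh : ∀ᶠ t : ℕ in Filter.atTop, ∑ i, h i * ((t + d - (i : ℕ)).choose d : ℤ) = 0) (t : ℕ) :
    ∑ i, h i * ((t + d - (i : ℕ)).choose d : ℤ) = 0 := by
  set p : ℤ[X] := ∑ i : Fin (d + 1), C (h i) * (descPochhammer ℤ d).comp (X + C ((d : ℤ) - i))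
  have eval_p (t : ℕ) :
      p.eval (t : ℤ) = d.factorial * ∑ i, h i * ((t + d - (i : ℕ)).choose d : ℤ) := by
    simp only [p, eval_finsetSum, eval_mul, eval_C, eval_comp, eval_add, eval_X, Finset.mul_sum]
    refine Finset.sum_congr rfl fun i _ => ?_
    have cast_sub : (t : ℤ) + (d - i) = (t + d - (i : ℕ) : ℕ) := by omega
    rw [cast_sub, descPochhammer_eval_eq_descFactorial, Nat.descFactorial_eq_factorial_mul_choose]
    push_cast
    ring
  have infinite_roots : {x : ℤ | p.IsRoot x}.Infinite := by
    have hinf := (Nat.frequently_atTop_iff_infinite.1 hh.frequently).image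
      (Nat.cast_injective (R := ℤ)).injOn
    refine hinf.mono ?_
    rintro _ ⟨t, ht, rfl⟩
    exact (eval_p t).trans (by rw [ht, mul_zero])
  have p_eq_zero : p = 0 := eq_zero_of_infinite_isRoot p infinite_roots
  simpa [p_eq_zero, d.factorial_ne_zero] using (eval_p t).symm

theorem eq_zero_of_sum_mul_choose_eq_zero {h : Fin (d + 1) → ℤ}
    (hh : ∀ t : ℕ, ∑ i, h i * ((t + d - (i : ℕ)).choose d : ℤ) = 0) : h = 0 := by
  funext i
  induction i using WellFoundedLT.induction with
  | ind i ih =>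
    have sum_eq : ∑ j, h j * ((i + d - (j : ℕ)).choose d : ℤ) = h i := by
      rw [Finset.sum_eq_single_of_mem i (Finset.mem_univ i)]
      · simp
      · intro j _ hj
        rcases lt_or_gt_of_ne hj with hj | hj
        · simp [ih j hj]
        · rw [Nat.choose_eq_zero_of_lt (by omega), Nat.cast_zero, mul_zero]
    rw [← sum_eq, hh, Pi.zero_apply]

theorem IsHStarVector.unique {P : Set (Fin d → ℝ)} {h h' : Fin (d + 1) → ℤ}
    (hP : IsHStarVector P h) (hP' : IsHStarVector P h') : h = h' := by
  refine sub_eq_zero.1 (eq_zero_of_sum_mul_choose_eq_zero <|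
    sum_mul_choose_eq_zero_of_eventually ?_)
  filter_upwards [Filter.eventually_ge_atTop 1] with t ht
  simp only [Pi.sub_apply, sub_mul, Finset.sum_sub_distrib, ← hP t ht, ← hP' t ht, sub_self]

end HStarVector

section Sums

theorem sum_range_min_eq {a t : ℕ} (hat : a ≤ t) :
    ∑ b ∈ Finset.range (t + 1), min a b =
      ∑ b ∈ Finset.range (t + 1), (a + b - t) + a * (t - a) := by
  have reflect : ∑ b ∈ Finset.range (t + 1), (a + b - t) = ∑ b ∈ Finset.range (t + 1), (a - b) := by
    rw [← Finset.sum_flip]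
    refine Finset.sum_congr rfl fun b hb => ?_
    rw [Finset.mem_range] at hb
    omega
  rw [reflect]
  clear reflect
  induction t, hat using Nat.le_induction with
  | base =>
    rw [← Finset.sum_flip, Nat.sub_self, mul_zero, add_zero]
    exact Finset.sum_congr rfl fun b _ => min_eq_right (Nat.sub_le a b)
  | succ t hat ih =>
    rw [Finset.sum_range_succ, ih, Finset.sum_range_succ _ (t + 1), Nat.sub_add_comm hat,
      Nat.sub_eq_zero_of_le (hat.trans t.le_succ), min_eq_left (hat.trans t.le_succ)]
    ring

theorem sum_range_min_sub {a t : ℕ} (hat : a ≤ t) :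
    ∑ b ∈ Finset.range (t + 1), (min a b - (a + b - t)) = a * (t - a) := by
  rw [Finset.sum_tsub_distrib, sum_range_min_eq hat, Nat.add_sub_cancel_left]
  intro b hb
  rw [Finset.mem_range] at hb
  omega

theorem sum_range_mul_sub (t : ℕ) :
    ∑ a ∈ Finset.range (t + 1), a * (t - a) = (t + 1).choose 3 := by
  induction t with
  | zero => rfl
  | succ t ih =>
    have step : ∀ a ∈ Finset.range (t + 1), a * (t + 1 - a) = a * (t - a) + a := fun a ha => by
      rw [Nat.sub_add_comm (Finset.mem_range_succ_iff.1 ha), mul_add_one]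
    rw [Finset.sum_range_succ, Finset.sum_congr rfl step, Finset.sum_add_distrib, ih,
      Finset.sum_range_id, ← Nat.choose_two_right, Nat.sub_self, mul_zero, add_zero, add_comm]
    rfl

theorem add_one_pow_three_eq_sum_choose (t : ℕ) :
    (t + 1) ^ 3 = (t + 3).choose 3 + 4 * (t + 2).choose 3 + (t + 1).choose 3 := by
  have six_mul_choose (n : ℕ) : 6 * (n + 2).choose 3 = (n + 2) * (n + 1) * n := by
    rw [← show Nat.factorial 3 = 6 from rfl, ← Nat.descFactorial_eq_factorial_mul_choose]
    simp only [Nat.descFactorial, Nat.add_sub_cancel, Nat.sub_zero, Nat.add_succ_sub_one, mul_one]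
    ring
  obtain _ | t := t
  · rfl
  · have h₂ := six_mul_choose t
    have h₁ := six_mul_choose (t + 1)
    have h₀ := six_mul_choose (t + 2)
    linarith

theorem natCast_tsub_eq_max {R : Type*} [Ring R] [LinearOrder R] [IsStrictOrderedRing R]
    (m n : ℕ) :
    ((m - n : ℕ) : R) = max 0 ((m : R) - n) := by
  rcases le_total m n with h | h
  · rw [Nat.sub_eq_zero_of_le h, Nat.cast_zero,
      max_eq_left (sub_nonpos.2 (Nat.cast_le.2 h))]
  · rw [Nat.cast_sub h, max_eq_right (sub_nonneg.2 (Nat.cast_le.2 h))]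

end Sums

section Convexity

variable {𝕜 : Type*} [Field 𝕜] [LinearOrder 𝕜] [IsStrictOrderedRing 𝕜]

theorem smul_add_smul_add_smul_mem_of_convex {E : Type*} [AddCommGroup E] [Module 𝕜 E]
    {s : Set E} (hs : Convex 𝕜 s) {x y z : E} (hx : x ∈ s) (hy : y ∈ s) (hz : z ∈ s) {a b c : 𝕜}
    (ha : 0 ≤ a) (hb : 0 ≤ b) (hc : 0 ≤ c) (habc : a + b + c = 1) :
    a • x + b • y + c • z ∈ s := by
  have h := hs.sum_mem (t := Finset.univ) (w := ![a, b, c]) (z := ![x, y, z])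
    (by simp [Fin.forall_fin_succ, ha, hb, hc]) (by simp [Fin.sum_univ_three, habc])
    (by simp [Fin.forall_fin_succ, hx, hy, hz])
  simpa [Fin.sum_univ_three] using h

theorem mem_of_convex_of_update_mem {ι : Type*} [DecidableEq ι] {s : Set (ι → 𝕜)}
    (hs : Convex 𝕜 s) {p : ι → 𝕜} {i : ι} {l u : 𝕜} (hl : Function.update p i l ∈ s)
    (hu : Function.update p i u ∈ s) (hp : p i ∈ Set.Icc l u) : p ∈ s := by
  rw [← segment_eq_Icc (hp.1.trans hp.2)] at hp
  obtain ⟨a, b, ha, hb, hab, hi⟩ := hp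
  convert hs hl hu ha hb hab
  ext j
  obtain rfl | hj := eq_or_ne j i
  · simpa using hi.symm
  · simp [hj, ← add_mul, hab]

end Convexity

section FoldedPrism

/-- The points over the square `[0, t]²` above the floor `z = c * max 0 (x + y - t)` and below the
roof `z = t + c * min x y`. The polytope of the theorem is `foldedPrism k 1`, and its `t`-th dilate
is `foldedPrism k t`. -/
def foldedPrism (c t : ℝ) : Set (Fin 3 → ℝ) :=
  {p | (p 0 ∈ Set.Icc 0 t ∧ p 1 ∈ Set.Icc 0 t) ∧
    p 2 ∈ Set.Icc (c * max 0 (p 0 + p 1 - t)) (t + c * min (p 0) (p 1))}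

theorem mem_foldedPrism_iff {c t : ℝ} (hc : 0 ≤ c) {p : Fin 3 → ℝ} :
    p ∈ foldedPrism c t ↔ 0 ≤ p 0 ∧ p 0 ≤ t ∧ 0 ≤ p 1 ∧ p 1 ≤ t ∧ 0 ≤ p 2 ∧
      c * (p 0 + p 1 - t) ≤ p 2 ∧ p 2 ≤ t + c * p 0 ∧ p 2 ≤ t + c * p 1 := by
  simp only [foldedPrism, Set.mem_ofPred_eq, Set.mem_Icc, mul_max_of_nonneg _ _ hc, mul_zero,
    max_le_iff, mul_min_of_nonneg _ _ hc, ← min_add_add_left, le_min_iff, and_assoc]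

theorem convex_foldedPrism {c : ℝ} (hc : 0 ≤ c) (t : ℝ) : Convex ℝ (foldedPrism c t) := by
  intro p hp q hq a b ha hb hab
  rw [mem_foldedPrism_iff hc] at hp hq ⊢
  obtain ⟨hp₁, hp₂, hp₃, hp₄, hp₅, hp₆, hp₇, hp₈⟩ := hp
  obtain ⟨hq₁, hq₂, hq₃, hq₄, hq₅, hq₆, hq₇, hq₈⟩ := hq
  obtain rfl : b = 1 - a := by linarith
  simp only [Pi.add_apply, Pi.smul_apply, smul_eq_mul]
  refine ⟨?_, ?_, ?_, ?_, ?_, ?_, ?_, ?_⟩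
  · linear_combination a * hp₁ + (1 - a) * hq₁
  · linear_combination a * hp₂ + (1 - a) * hq₂
  · linear_combination a * hp₃ + (1 - a) * hq₃
  · linear_combination a * hp₄ + (1 - a) * hq₄
  · linear_combination a * hp₅ + (1 - a) * hq₅
  · linear_combination a * hp₆ + (1 - a) * hq₆
  · linear_combination a * hp₇ + (1 - a) * hq₇
  · linear_combination a * hp₈ + (1 - a) * hq₈

theorem smul_foldedPrism (c : ℝ) {t : ℝ} (ht : 0 < t) :
    t • foldedPrism c 1 = foldedPrism c t := by
  ext p
  rw [Set.mem_smul_set_iff_inv_smul_mem₀ ht.ne']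
  have hmax : max 0 (t⁻¹ * p 0 + t⁻¹ * p 1 - 1) = t⁻¹ * max 0 (p 0 + p 1 - t) := by
    rw [mul_max_of_nonneg _ _ (inv_nonneg.2 ht.le), mul_zero, mul_sub, mul_add,
      inv_mul_cancel₀ ht.ne']
  have hmin : min (t⁻¹ * p 0) (t⁻¹ * p 1) = t⁻¹ * min (p 0) (p 1) :=
    (mul_min_of_nonneg _ _ (inv_nonneg.2 ht.le)).symm
  simp only [foldedPrism, Set.mem_ofPred_eq, Set.mem_Icc, Pi.smul_apply, smul_eq_mul, hmax, hmin]
  field_simp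
  simp only [zero_mul]

/-- The eight vertices of `foldedPrism c 1`, in the order of the theorem. -/
def foldedPrismVertex {R : Type*} [AddMonoidWithOne R] (c : R) : Fin 8 → Fin 3 → R :=
  ![![0, 0, 0], ![1, 0, 0], ![0, 1, 0], ![0, 0, 1], ![1, 0, 1], ![0, 1, 1], ![1, 1, c],
    ![1, 1, c + 1]]

theorem foldedPrismVertex_injective {R : Type*} [Ring R] [Nontrivial R] (c : R) :
    Function.Injective (foldedPrismVertex c) := by
  intro a b hab
  have h₀ := congrFun hab 0
  have h₁ := congrFun hab 1
  have h₂ := congrFun hab 2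
  fin_cases a <;> fin_cases b <;> simp_all [foldedPrismVertex]

theorem toR_foldedPrismVertex (m : ℤ) (a : Fin 8) :
    toR (foldedPrismVertex m a) = foldedPrismVertex (m : ℝ) a := by
  ext i
  fin_cases a <;> fin_cases i <;> simp [toR, foldedPrismVertex]

theorem foldedPrismVertex_mem {c : ℝ} (hc : 0 ≤ c) (a : Fin 8) :
    foldedPrismVertex c a ∈ foldedPrism c 1 := by
  rw [mem_foldedPrism_iff hc]
  fin_cases a <;> simp [foldedPrismVertex, hc, add_comm] <;> linarith

section Hull

variable {c : ℝ} {s : Set (Fin 3 → ℝ)} {p : Fin 3 → ℝ}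

theorem update_foldedPrism_floor_mem (hs : Convex ℝ s) (hv : ∀ a, foldedPrismVertex c a ∈ s)
    (h₀ : p 0 ∈ Set.Icc 0 1) (h₁ : p 1 ∈ Set.Icc 0 1) :
    Function.update p 2 (c * max 0 (p 0 + p 1 - 1)) ∈ s := by
  obtain ⟨h₀, h₀'⟩ := h₀
  obtain ⟨h₁, h₁'⟩ := h₁
  rcases le_total (p 0 + p 1) 1 with h | h
  · convert smul_add_smul_add_smul_mem_of_convex hs (hv 0) (hv 1) (hv 2) (sub_nonneg.2 h)
      h₀ h₁ (by ring) using 1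
    rw [max_eq_left (by linarith)]
    ext i
    fin_cases i <;> simp [foldedPrismVertex]
  · convert smul_add_smul_add_smul_mem_of_convex hs (hv 1) (hv 2) (hv 6) (sub_nonneg.2 h₁')
      (sub_nonneg.2 h₀') (sub_nonneg.2 h) (by ring) using 1
    rw [max_eq_right (by linarith)]
    ext i
    fin_cases i <;> simp [foldedPrismVertex, mul_comm]

theorem update_foldedPrism_roof_mem (hs : Convex ℝ s) (hv : ∀ a, foldedPrismVertex c a ∈ s)
    (h₀ : p 0 ∈ Set.Icc 0 1) (h₁ : p 1 ∈ Set.Icc 0 1) :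
    Function.update p 2 (1 + c * min (p 0) (p 1)) ∈ s := by
  obtain ⟨h₀, h₀'⟩ := h₀
  obtain ⟨h₁, h₁'⟩ := h₁
  rcases le_total (p 0) (p 1) with h | h
  · convert smul_add_smul_add_smul_mem_of_convex hs (hv 3) (hv 5) (hv 7) (sub_nonneg.2 h₁')
      (sub_nonneg.2 h) h₀ (by ring) using 1
    rw [min_eq_left h]
    ext i
    fin_cases i <;> simp [foldedPrismVertex]
    ring
  · convert smul_add_smul_add_smul_mem_of_convex hs (hv 3) (hv 4) (hv 7) (sub_nonneg.2 h₀')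
      (sub_nonneg.2 h) h₁ (by ring) using 1
    rw [min_eq_right h]
    ext i
    fin_cases i <;> simp [foldedPrismVertex]
    ring

end Hull

theorem convexHull_foldedPrismVertex {c : ℝ} (hc : 0 ≤ c) :
    convexHull ℝ (Set.range (foldedPrismVertex c)) = foldedPrism c 1 := by
  refine (convexHull_min (Set.range_subset_iff.2 (foldedPrismVertex_mem hc))
    (convex_foldedPrism hc 1)).antisymm fun p ⟨⟨h₀, h₁⟩, h₂⟩ => ?_
  have hull_convex := convex_convexHull ℝ (Set.range (foldedPrismVertex c))
  have vertex_mem (a) : foldedPrismVertex c a ∈ convexHull ℝ (Set.range (foldedPrismVertex c)) :=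
    subset_convexHull ℝ _ (Set.mem_range_self a)
  exact mem_of_convex_of_update_mem hull_convex
    (update_foldedPrism_floor_mem hull_convex vertex_mem h₀ h₁)
    (update_foldedPrism_roof_mem hull_convex vertex_mem h₀ h₁) h₂

end FoldedPrism

section Volume

theorem measure_prod_region_between_cc {α : Type*} [MeasurableSpace α] {μ : Measure α}
    {f g : α → ℝ} {s : Set α} (hf : Measurable f) (hg : Measurable g) (hs : MeasurableSet s) :
    μ.prod volume {p : α × ℝ | p.1 ∈ s ∧ p.2 ∈ Set.Icc (f p.1) (g p.1)} =
      ∫⁻ x in s, ENNReal.ofReal (g x - f x) ∂μ := by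
  rw [Measure.prod_apply (measurableSet_region_between_cc hf hg hs), ← lintegral_indicator hs]
  refine lintegral_congr fun x => ?_
  by_cases hx : x ∈ s
  · rw [Set.indicator_of_mem hx, ← Real.volume_Icc]
    simp [hx, Set.Icc]
  · simp [hx]

theorem measureReal_prod_region_between_cc {α : Type*} [MeasurableSpace α] {μ : Measure α}
    {f g : α → ℝ} {s : Set α} (hf : Measurable f) (hg : Measurable g) (hs : MeasurableSet s)
    (hfg : ∀ x ∈ s, f x ≤ g x) :
    (μ.prod volume).real {p : α × ℝ | p.1 ∈ s ∧ p.2 ∈ Set.Icc (f p.1) (g p.1)} =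
      ∫ x in s, (g x - f x) ∂μ := by
  rw [integral_eq_lintegral_of_nonneg_ae
      (ae_restrict_of_forall_mem hs fun x hx => sub_nonneg.2 (hfg x hx))
      (hg.sub hf).aestronglyMeasurable,
    ← measure_prod_region_between_cc hf hg hs, measureReal_def]

theorem volume_preserving_finThree_prod :
    MeasurePreserving (fun p : Fin 3 → ℝ => ((p 0, p 1), p 2)) volume volume := by
  have split_last := volume_preserving_piFinSuccAbove (fun _ : Fin 3 => ℝ) (Fin.last 2)
  have first_two : MeasurePreserving (Prod.map id (MeasurableEquiv.finTwoArrow (α := ℝ)))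
      (volume : Measure (ℝ × (Fin 2 → ℝ))) volume :=
    (MeasurePreserving.id volume).prod (volume_preserving_finTwoArrow ℝ)
  exact Measure.measurePreserving_swap.comp (first_two.comp split_last)

theorem integral_min_left {x t : ℝ} (hx : 0 ≤ x) (hxt : x ≤ t) :
    ∫ y in (0 : ℝ)..t, min x y = x ^ 2 / 2 + x * (t - x) := by
  have hcont : Continuous fun y : ℝ => min x y := by fun_prop
  have left : ∫ y in (0 : ℝ)..x, min x y = x ^ 2 / 2 := by
    rw [intervalIntegral.integral_congr (g := fun y => y) fun y hy =>
      min_eq_right (Set.uIcc_of_le hx ▸ hy).2]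
    simp
  have right : ∫ y in x..t, min x y = x * (t - x) := by
    rw [intervalIntegral.integral_congr (g := fun _ => x) fun y hy =>
      min_eq_left (Set.uIcc_of_le hxt ▸ hy).1]
    simp [mul_comm]
  rw [← left, ← right, intervalIntegral.integral_add_adjacent_intervals
    (hcont.intervalIntegrable _ _) (hcont.intervalIntegrable _ _)]

theorem integral_min_sub_max {x t : ℝ} (hx : 0 ≤ x) (hxt : x ≤ t) :
    ∫ y in (0 : ℝ)..t, (min x y - max 0 (x + y - t)) = x * (t - x) := by
  have hcont : Continuous fun y : ℝ => min x y := by fun_prop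
  have hcont' : Continuous fun y : ℝ => max 0 (x + y - t) := by fun_prop
  have reflect : ∫ y in (0 : ℝ)..t, max 0 (x + y - t) = ∫ y in (0 : ℝ)..t, (x - min x y) := by
    have h := intervalIntegral.integral_comp_sub_left (a := 0) (b := t) (fun y => x - min x y) t
    rw [sub_self, sub_zero] at h
    rw [← h]
    congr! 2 with y
    rw [sub_inf, sub_self, sub_sub_eq_add_sub]
  rw [intervalIntegral.integral_sub (hcont.intervalIntegrable _ _)
    (hcont'.intervalIntegrable _ _), reflect, intervalIntegral.integral_sub
    (by simp) (hcont.intervalIntegrable _ _), integral_min_left hx hxt]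
  simp only [intervalIntegral.integral_const, smul_eq_mul, sub_zero]
  ring

theorem integral_roof_sub_floor {c x t : ℝ} (hx : 0 ≤ x) (hxt : x ≤ t) :
    ∫ y in (0 : ℝ)..t, (t + c * min x y - c * max 0 (x + y - t)) = t ^ 2 + c * (x * (t - x)) := by
  calc
    _ = ∫ y in (0 : ℝ)..t, (t + c * (min x y - max 0 (x + y - t))) := by
      congr! 2 with y
      ring
    _ = _ := by
      rw [intervalIntegral.integral_add (by simp) (Continuous.intervalIntegrable (by fun_prop) _ _),
        intervalIntegral.integral_const_mul, integral_min_sub_max hx hxt]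
      simp [sq]

theorem foldedPrism_floor_le_roof {c t x y : ℝ} (hc : 0 ≤ c) (hx : x ∈ Set.Icc 0 t)
    (hy : y ∈ Set.Icc 0 t) :
    c * max 0 (x + y - t) ≤ t + c * min x y := by
  have hmax : max 0 (x + y - t) ≤ min x y :=
    max_le (le_min hx.1 hy.1) (le_min (by linarith [hy.2]) (by linarith [hx.2]))
  linarith [mul_le_mul_of_nonneg_left hmax hc, hx.1.trans hx.2]

theorem volume_foldedPrism_eq_integral {c t : ℝ} (hc : 0 ≤ c) (ht : 0 ≤ t) :
    (volume (foldedPrism c t)).toReal =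
      ∫ x in (0 : ℝ)..t, ∫ y in (0 : ℝ)..t, (t + c * min x y - c * max 0 (x + y - t)) := by
  set floor : ℝ × ℝ → ℝ := fun q => c * max 0 (q.1 + q.2 - t) with floor_def
  set roof : ℝ × ℝ → ℝ := fun q => t + c * min q.1 q.2 with roof_def
  have floor_cont : Continuous floor := by fun_prop
  have roof_cont : Continuous roof := by fun_prop
  have square_meas : MeasurableSet (Set.Icc (0 : ℝ) t ×ˢ Set.Icc (0 : ℝ) t) :=
    measurableSet_Icc.prod measurableSet_Icc
  have integrable : IntegrableOn (fun q => roof q - floor q) (Set.Icc 0 t ×ˢ Set.Icc 0 t)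
      (volume.prod volume) :=
    (roof_cont.sub floor_cont).continuousOn.integrableOn_compact
      (isCompact_Icc.prod isCompact_Icc)
  have volume_eq : volume (foldedPrism c t) = (volume.prod volume) {p : (ℝ × ℝ) × ℝ |
      p.1 ∈ Set.Icc 0 t ×ˢ Set.Icc 0 t ∧ p.2 ∈ Set.Icc (floor p.1) (roof p.1)} :=
    volume_preserving_finThree_prod.measure_preimage (measurableSet_region_between_cc
      floor_cont.measurable roof_cont.measurable square_meas).nullMeasurableSet
  rw [volume_eq, ← measureReal_def, measureReal_prod_region_between_cc floor_cont.measurable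
    roof_cont.measurable square_meas fun q hq => foldedPrism_floor_le_roof hc hq.1 hq.2,
    Measure.volume_eq_prod, setIntegral_prod _ integrable]
  simp only [floor_def, roof_def, integral_Icc_eq_integral_Ioc,
    ← intervalIntegral.integral_of_le ht]

theorem volume_foldedPrism {c t : ℝ} (hc : 0 ≤ c) (ht : 0 ≤ t) :
    (volume (foldedPrism c t)).toReal = t ^ 3 * (1 + c / 6) := by
  calc
    _ = ∫ x in (0 : ℝ)..t, ∫ y in (0 : ℝ)..t, (t + c * min x y - c * max 0 (x + y - t)) :=
      volume_foldedPrism_eq_integral hc ht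
    _ = ∫ x in (0 : ℝ)..t, (t ^ 2 + c * (t * x - x ^ 2)) := by
      refine intervalIntegral.integral_congr fun x hx => ?_
      rw [Set.uIcc_of_le ht] at hx
      simp only [integral_roof_sub_floor hx.1 hx.2]
      ring
    _ = t ^ 3 * (1 + c / 6) := by
      rw [intervalIntegral.integral_add (by simp) (Continuous.intervalIntegrable (by fun_prop) _ _),
        intervalIntegral.integral_const_mul, intervalIntegral.integral_sub
          (Continuous.intervalIntegrable (by fun_prop) _ _) (by simp),
        intervalIntegral.integral_const_mul t fun x => x]
      simp only [intervalIntegral.integral_const, integral_id, integral_pow, smul_eq_mul]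
      push_cast
      ring

end Volume

section LatticePoints

theorem nonneg_of_mem_foldedPrism {c t : ℝ} (hc : 0 ≤ c) {p : Fin 3 → ℝ}
    (hp : p ∈ foldedPrism c t) : 0 ≤ p := by
  obtain ⟨⟨h₀, h₁⟩, h₂⟩ := hp
  have h₂' : 0 ≤ p 2 := (mul_nonneg hc (le_max_left _ _)).trans h₂.1
  simp [Pi.le_def, Fin.forall_fin_succ, h₀.1, h₁.1, h₂']

/-- The lattice points of `foldedPrism k t`, indexed by their natural number coordinates and fibred
over the square `[0, t]²`. The truncated subtraction encodes `max 0 (a + b - t)`. -/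
def foldedPrismPoints (k t : ℕ) : Finset ((_ : ℕ × ℕ) × ℕ) :=
  (Finset.range (t + 1) ×ˢ Finset.range (t + 1)).sigma fun q =>
    Finset.Icc (k * (q.1 + q.2 - t)) (t + k * min q.1 q.2)

theorem card_foldedPrismPoints (k t : ℕ) :
    (foldedPrismPoints k t).card = (t + 1) ^ 3 + k * (t + 1).choose 3 := by
  have card_fiber {a b : ℕ} (ha : a ∈ Finset.range (t + 1)) (hb : b ∈ Finset.range (t + 1)) :
      (Finset.Icc (k * (a + b - t)) (t + k * min a b)).card =
        (t + 1) + k * (min a b - (a + b - t)) := by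
    rw [Finset.mem_range] at ha hb
    have floor_le : k * (a + b - t) ≤ k * min a b := Nat.mul_le_mul_left k (by omega)
    rw [Nat.card_Icc, Nat.mul_sub k (min a b), Nat.add_right_comm, Nat.add_sub_assoc floor_le]
  calc
    _ = ∑ a ∈ Finset.range (t + 1), ∑ b ∈ Finset.range (t + 1),
          ((t + 1) + k * (min a b - (a + b - t))) := by
      rw [foldedPrismPoints, Finset.card_sigma, Finset.sum_product]
      exact Finset.sum_congr rfl fun a ha => Finset.sum_congr rfl fun b hb => card_fiber ha hb
    _ = ∑ a ∈ Finset.range (t + 1), ((t + 1) ^ 2 + k * (a * (t - a))) := by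
      refine Finset.sum_congr rfl fun a ha => ?_
      rw [Finset.sum_add_distrib, ← Finset.mul_sum,
        sum_range_min_sub (Finset.mem_range_succ_iff.1 ha)]
      simp [sq]
    _ = _ := by
      rw [Finset.sum_add_distrib, ← Finset.mul_sum, sum_range_mul_sub]
      simp [pow_succ']

/-- The integer point with the natural number coordinates recorded by an element of
`foldedPrismPoints`. -/
def toIntPoint (s : (_ : ℕ × ℕ) × ℕ) : Fin 3 → ℤ := ![(s.1.1 : ℤ), (s.1.2 : ℤ), (s.2 : ℤ)]

theorem toIntPoint_injective : Function.Injective toIntPoint := by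
  rintro ⟨⟨a, b⟩, c⟩ ⟨⟨a', b'⟩, c'⟩ h
  simp_all [toIntPoint]

theorem toR_toIntPoint_mem_foldedPrism {k t : ℕ} {s : (_ : ℕ × ℕ) × ℕ} :
    toR (toIntPoint s) ∈ foldedPrism k t ↔ s ∈ foldedPrismPoints k t := by
  have floor_cast :
      (max 0 ((s.1.1 : ℝ) + s.1.2 - t)) = ((s.1.1 + s.1.2 - t : ℕ) : ℝ) := by
    rw [natCast_tsub_eq_max, Nat.cast_add]
  simp only [foldedPrism, foldedPrismPoints, toR, toIntPoint, Set.mem_ofPred_eq, Set.mem_Icc,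
    Matrix.cons_val, Int.cast_natCast, floor_cast, Nat.cast_nonneg, true_and,
    Finset.mem_sigma, Finset.mem_product, Finset.mem_range_succ_iff, Finset.mem_Icc]
  norm_cast

theorem setOf_toR_mem_foldedPrism (k t : ℕ) :
    {x : Fin 3 → ℤ | toR x ∈ foldedPrism k t} = toIntPoint '' foldedPrismPoints k t := by
  ext x
  constructor
  · intro hx
    have toNat_eq (i : Fin 3) : ((x i).toNat : ℤ) = x i := Int.toNat_of_nonneg <|
      Int.cast_nonneg_iff.1 (nonneg_of_mem_foldedPrism (Nat.cast_nonneg k) hx i)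
    have point_eq : toIntPoint ⟨((x 0).toNat, (x 1).toNat), (x 2).toNat⟩ = x := by
      ext i
      fin_cases i <;> exact toNat_eq _
    refine ⟨_, toR_toIntPoint_mem_foldedPrism.1 ?_, point_eq⟩
    rwa [point_eq]
  · rintro ⟨s, hs, rfl⟩
    exact toR_toIntPoint_mem_foldedPrism.2 hs

theorem ncard_setOf_toR_mem_foldedPrism (k t : ℕ) :
    {x : Fin 3 → ℤ | toR x ∈ foldedPrism k t}.ncard = (t + 1) ^ 3 + k * (t + 1).choose 3 := by
  rw [setOf_toR_mem_foldedPrism, Set.ncard_image_of_injective _ toIntPoint_injective,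
    Set.ncard_coe_finset, card_foldedPrismPoints]

theorem isHStarVector_foldedPrism (k : ℕ) :
    IsHStarVector (foldedPrism k 1) ![1, 4, (k : ℤ) + 1, 0] := by
  intro t ht
  rw [smul_foldedPrism _ (Nat.cast_pos.2 ht), ncard_setOf_toR_mem_foldedPrism,
    add_one_pow_three_eq_sum_choose, Fin.sum_univ_four]
  simp only [Matrix.cons_val, Fin.coe_ofNat_eq_mod]
  push_cast
  ring

end LatticePoints

theorem stmt18_general (k : ℕ)
    (vtx : Fin 8 → Fin 3 → ℤ)
    (hvtx : vtx = ![![0, 0, 0], ![1, 0, 0], ![0, 1, 0], ![0, 0, 1], ![1, 0, 1],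
      ![0, 1, 1], ![1, 1, (k : ℤ)], ![1, 1, (k : ℤ) + 1]])
    (Q : Set (Fin 3 → ℝ))
    (hQ : Q = convexHull ℝ (Set.range fun a : Fin 8 => toR (vtx a))) :
    (6 : ℝ) * (volume Q).toReal = (k : ℝ) + 6 ∧
      {x : Fin 3 → ℤ | toR x ∈ Q} = Set.range vtx ∧
      {x : Fin 3 → ℤ | toR x ∈ Q}.ncard = 8 ∧
      ∀ h : Fin 4 → ℤ, IsHStarVector Q h ↔ h = ![1, 4, (k : ℤ) + 1, 0] := by
  have hk : (0 : ℝ) ≤ k := Nat.cast_nonneg k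
  have vtx_eq : vtx = foldedPrismVertex (k : ℤ) := hvtx
  have Q_eq : Q = foldedPrism k 1 := by
    rw [hQ, vtx_eq]
    simp only [toR_foldedPrismVertex, Int.cast_natCast, convexHull_foldedPrismVertex hk]
  have vertices_subset : Set.range vtx ⊆ {x | toR x ∈ Q} := by
    rw [hQ]
    exact Set.range_subset_iff.2 fun a => subset_convexHull ℝ _ (Set.mem_range_self a)
  have ncard_vertices : (Set.range vtx).ncard = 8 := by
    rw [vtx_eq, Set.ncard_range_of_injective (foldedPrismVertex_injective _), Nat.card_fin]
  have ncard_points : {x : Fin 3 → ℤ | toR x ∈ Q}.ncard = 8 := by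
    simpa [Q_eq] using ncard_setOf_toR_mem_foldedPrism k 1
  have hstar : IsHStarVector Q ![1, 4, (k : ℤ) + 1, 0] := Q_eq ▸ isHStarVector_foldedPrism k
  refine ⟨?_, ?_, ncard_points, fun h => ⟨fun hh => hh.unique hstar, fun hh => hh ▸ hstar⟩⟩
  · rw [Q_eq, volume_foldedPrism hk zero_le_one]
    ring
  · exact (Set.eq_of_subset_of_ncard_le vertices_subset (by rw [ncard_vertices, ncard_points])
      (Set.finite_of_ncard_ne_zero (by rw [ncard_points]; norm_num))).symm

/-- For each nonnegative integer `k`, the polytope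
`Q = conv(0, e₁, e₂, e₃, e₁+e₃, e₂+e₃, e₁+e₂+ke₃, e₁+e₂+(k+1)e₃) ⊂ ℝ³` has
normalized volume `k + 6`, and when `k ≥ 2` it has exactly `8` lattice points
(its vertices); consequently its `h*`-vector is `(1, 4, k+1, 0)`. -/
theorem stmt18 (k : ℕ)
    (vtx : Fin 8 → Fin 3 → ℤ)
    (hvtx : vtx = ![![0, 0, 0], ![1, 0, 0], ![0, 1, 0], ![0, 0, 1], ![1, 0, 1],
      ![0, 1, 1], ![1, 1, (k : ℤ)], ![1, 1, (k : ℤ) + 1]])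
    (Q : Set (Fin 3 → ℝ))
    (hQ : Q = convexHull ℝ (Set.range fun a : Fin 8 => toR (vtx a))) :
    (6 : ℝ) * (volume Q).toReal = (k : ℝ) + 6 ∧
    (2 ≤ k →
      {x : Fin 3 → ℤ | toR x ∈ Q} = Set.range vtx ∧
      {x : Fin 3 → ℤ | toR x ∈ Q}.ncard = 8 ∧
      ∀ h : Fin 4 → ℤ,
        (∀ t : ℕ, 1 ≤ t →
          ({x : Fin 3 → ℤ | toR x ∈ (t : ℝ) • Q}.ncard : ℤ) =
            ∑ i : Fin 4, h i * (Nat.choose (t + 3 - (i : ℕ)) 3 : ℤ)) →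
        h = ![1, 4, (k : ℤ) + 1, 0]) := by
  obtain ⟨hvol, hpts, hcard, hstar⟩ := stmt18_general k vtx hvtx Q hQ
  exact ⟨hvol, fun _ => ⟨hpts, hcard, fun h => (hstar h).1⟩⟩
end
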